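/- Let G be the binary recurrence sequence with parameters A = 2, B = 2 and initial values G_0 = 3, G_1 = 2 (so G_{n+2} = 2·G_{n+1} + 2·G_n). Then for every prime q ∈ {3, 5, 7, 11, 13, 17}, the sequence contains no q-th powers: there are no n ≥ 0 and x ∈ ℤ with G_n = x^q. -/

import Mathlib

def badAt (q p a : ℕ) : Bool :=
  let r := (a % p) ^ ((p - 1) / q) % p
  r != 0 && r != 1

def sieve (q Q : ℕ) (ps : List ℕ) : ℕ → ℕ → ℕ → Bool
  | 0, a, b => a == 3 && b == 2
  | n + 1, a, b => ps.any (fun p => badAt q p a) && sieve q Q ps n b ((2 * b + 2 * a) % Q)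

theorem badAt_sound {q p a : ℕ} (hp : p.Prime) (hq : q * ((p - 1) / q) = p - 1)
    (h : badAt q p a = true) (g x : ℤ) (hg : (a : ZMod p) = (g : ZMod p)) : g ≠ x ^ q := by
  rintro rfl
  haveI : Fact p.Prime := ⟨hp⟩
  have key : (((a % p) ^ ((p - 1) / q) % p : ℕ) : ZMod p) = (x : ZMod p) ^ (p - 1) := by
    rw [ZMod.natCast_mod, Nat.cast_pow, ZMod.natCast_mod, hg, Int.cast_pow, ← pow_mul, hq]
  have hlt : (a % p) ^ ((p - 1) / q) % p < p := Nat.mod_lt _ hp.pos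
  simp only [badAt, Bool.and_eq_true, bne_iff_ne, ne_eq] at h
  generalize (a % p) ^ ((p - 1) / q) % p = r at *
  by_cases hx : (x : ZMod p) = 0
  · rw [hx, zero_pow (Nat.sub_ne_zero_of_lt hp.one_lt), ZMod.natCast_eq_zero_iff] at key
    exact h.1 (Nat.eq_zero_of_dvd_of_lt key hlt)
  · rw [ZMod.pow_card_sub_one_eq_one hx, ← Nat.cast_one, ZMod.natCast_eq_natCast_iff'] at key
    rw [Nat.mod_eq_of_lt hlt, Nat.mod_eq_of_lt hp.one_lt] at key
    exact h.2 key

theorem sieve_sound {q Q : ℕ} {ps : List ℕ}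
    (hps : ∀ p ∈ ps, p.Prime ∧ q * ((p - 1) / q) = p - 1 ∧ p ∣ Q)
    (G : ℕ → ℤ) (hGrec : ∀ n : ℕ, G (n + 2) = 2 * G (n + 1) + 2 * G n)
    (k : ℕ) : ∀ (a b n : ℕ), sieve q Q ps k a b = true →
      (a : ZMod Q) = (G n : ZMod Q) → (b : ZMod Q) = (G (n + 1) : ZMod Q) →
      (∀ j < k, ∀ x : ℤ, G (n + j) ≠ x ^ q) ∧
        ((3 : ℕ) : ZMod Q) = (G (n + k) : ZMod Q) ∧
        ((2 : ℕ) : ZMod Q) = (G (n + k + 1) : ZMod Q) := by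
  induction k with
  | zero =>
    intro a b n h ha hb
    simp only [sieve, Bool.and_eq_true, beq_iff_eq] at h
    obtain ⟨rfl, rfl⟩ := h
    exact ⟨by simp, ha, hb⟩
  | succ k ih =>
    intro a b n h ha hb
    simp only [sieve, Bool.and_eq_true, List.any_eq_true] at h
    obtain ⟨⟨p, hp, hbad⟩, h2⟩ := h
    obtain ⟨i1, i2, i3⟩ := ih _ _ (n + 1) h2 hb (by
      rw [ZMod.natCast_mod, show n + 1 + 1 = n + 2 from rfl, hGrec]
      push_cast
      rw [ha, hb])
    refine ⟨?_, ?_, ?_⟩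
    · intro j hj x
      cases j with
      | zero =>
        obtain ⟨h1, h3, h4⟩ := hps p hp
        refine badAt_sound h1 h3 hbad _ _ ?_
        have := congrArg (ZMod.castHom h4 (ZMod p)) ha
        simpa using this
      | succ j =>
        have := i1 j (by omega) x
        rwa [show n + (j + 1) = n + 1 + j by ring]
    · rwa [show n + (k + 1) = n + 1 + k by ring]
    · rwa [show n + (k + 1) + 1 = n + 1 + k + 1 by ring]

theorem sieve_main {q Q M : ℕ} {ps : List ℕ} (hM : 0 < M)
    (hps : ∀ p ∈ ps, p.Prime ∧ q * ((p - 1) / q) = p - 1 ∧ p ∣ Q)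
    (hs : sieve q Q ps M 3 2 = true)
    (G : ℕ → ℤ) (hG0 : G 0 = 3) (hG1 : G 1 = 2)
    (hGrec : ∀ n : ℕ, G (n + 2) = 2 * G (n + 1) + 2 * G n) :
    ¬ ∃ (n : ℕ) (x : ℤ), G n = x ^ q := by
  rintro ⟨n, x, hx⟩
  have per : ∀ t : ℕ, ((3 : ℕ) : ZMod Q) = (G (M * t) : ZMod Q) ∧
      ((2 : ℕ) : ZMod Q) = (G (M * t + 1) : ZMod Q) := by
    intro t
    induction t with
    | zero => simp [hG0, hG1]
    | succ t ih => exact (sieve_sound hps G hGrec M 3 2 (M * t) hs ih.1 ih.2).2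
  have := (sieve_sound hps G hGrec M 3 2 (M * (n / M)) hs (per _).1 (per _).2).1
    (n % M) (Nat.mod_lt _ hM) x
  rw [Nat.div_add_mod] at this
  exact this hx

/-- The binary recurrence sequence with `G 0 = 3`, `G 1 = 2` and
`G (n+2) = 2 * G (n + 1) + 2 * G n` contains no `q`-th powers for any prime
`q ∈ {3, 5, 7, 11, 13, 17}`. -/
theorem no_powers_A2_B2_u3_v2
    (G : ℕ → ℤ) (hG0 : G 0 = 3) (hG1 : G 1 = 2)
    (hGrec : ∀ n : ℕ, G (n + 2) = 2 * G (n + 1) + 2 * G n) :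
    ∀ q ∈ ({3, 5, 7, 11, 13, 17} : Finset ℕ), Nat.Prime q →
      ¬ ∃ (n : ℕ) (x : ℤ), G n = x ^ q := by
  intro q hq _
  simp only [Finset.mem_insert, Finset.mem_singleton] at hq
  rcases hq with rfl | rfl | rfl | rfl | rfl | rfl
  · exact sieve_main (Q := 13) (M := 12) (ps := [13]) (by norm_num)
      (by simp; norm_num) (by decide +kernel) G hG0 hG1 hGrec
  · exact sieve_main (Q := 11 * 61 * 241) (M := 240) (ps := [11, 61, 241]) (by norm_num)
      (by simp; norm_num) (by decide +kernel) G hG0 hG1 hGrec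
  · exact sieve_main (Q := 71) (M := 70) (ps := [71]) (by norm_num)
      (by simp; norm_num) (by decide +kernel) G hG0 hG1 hGrec
  · exact sieve_main (Q := 23 * 661 * 1321 * 3301) (M := 3300) (ps := [23, 661, 1321, 3301])
      (by norm_num) (by simp; norm_num) (by decide +kernel) G hG0 hG1 hGrec
  · exact sieve_main (Q := 157 * 313) (M := 312) (ps := [157, 313]) (by norm_num)
      (by simp; norm_num) (by decide +kernel) G hG0 hG1 hGrec
  · exact sieve_main (Q := 409 * 613) (M := 612) (ps := [409, 613]) (by norm_num)
      (by simp; norm_num) (by decide +kernel) G hG0 hG1 hGrec
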